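/- Let 0 < d < 4/5 with d ≠ 1/2, and let B = ∫₀¹∫₀¹ (1-u)^{2-2d} v^{1-d} (1-v)^{2-3d} (1-uv)^{5d-5} ₂F₁(d,2d-1;2d;u) ₂F₁(1,d;2-d;v) du dv. Then (1/(d-1)) · (Γ(1-2d)/Γ(2-2d)) · B = [Γ(1-d)Γ(2-2d)Γ(3-3d)Γ(4-5d) / ((d-1) Γ(3-2d) Γ(5-5d) Γ(4-4d))] · ₄F₃(1, d, 2-2d, 3-3d; 2-d, 3-2d, 4-4d; 1) + [Γ(1-d)² Γ(2-2d)² Γ(2d-1) Γ(3-3d) / (Γ(d)² Γ(5-5d) (4-5d) Γ(4-4d))] · ₃F₂(2-2d, 3-3d, 4-5d; 4-4d, 5-5d; 1). -/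

import Mathlib

open Real MeasureTheory

/-- Pochhammer symbol `(a)_k = a (a+1) ⋯ (a+k-1)` for real `a`. -/
noncomputable def poch (a : ℝ) (k : ℕ) : ℝ := (ascPochhammer ℝ k).eval a

/-- Gaussian hypergeometric function `₂F₁(a,b;c;z)`. -/
noncomputable def hyp2F1 (a b c z : ℝ) : ℝ :=
  ∑' k : ℕ, (poch a k * poch b k) / poch c k * z ^ k / (Nat.factorial k)

/-- Generalized hypergeometric function `₃F₂(a₁,a₂,a₃;b₁,b₂;z)`. -/
noncomputable def hyp3F2 (a₁ a₂ a₃ b₁ b₂ z : ℝ) : ℝ :=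
  ∑' k : ℕ, (poch a₁ k * poch a₂ k * poch a₃ k) / (poch b₁ k * poch b₂ k) * z ^ k /
    (Nat.factorial k)

/-- Generalized hypergeometric function `₄F₃(a₁,a₂,a₃,a₄;b₁,b₂,b₃;z)`. -/
noncomputable def hyp4F3 (a₁ a₂ a₃ a₄ b₁ b₂ b₃ z : ℝ) : ℝ :=
  ∑' k : ℕ, (poch a₁ k * poch a₂ k * poch a₃ k * poch a₄ k) /
    (poch b₁ k * poch b₂ k * poch b₃ k) * z ^ k / (Nat.factorial k)

/-!
Write the factor of the integrand depending on `v` as an incomplete beta integral over `0 < s < v`.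
The `v`-integral over `s < v < 1` is then elementary, and what remains is Euler's integral for a
multiple of `₂F₁(d, 3-3d; 4-4d; u)`, so `B` is a multiple of
`∫₀¹ ₂F₁(d, 2d-1; 2d; u) ₂F₁(d, 3-3d; 4-4d; u) du`. Expand the second factor in powers of `u`: the
`k`-th moment of `₂F₁(a, b; b+1; ·)` is `b (β(b, 1-a) - β(1+k, 1-a)) / (1-b+k)`, and the two terms
sum to a `₃F₂` and to the `₄F₃` of the formula. Thomae's transformation brings the `₃F₂` to the
stated form.
-/

section Development

open Set Filter Topology
open ProbabilityTheory (beta beta_pos beta_eq_betaIntegralReal)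

lemma poch_zero (a : ℝ) : poch a 0 = 1 := by simp [poch]

lemma poch_succ (a : ℝ) (k : ℕ) : poch a (k + 1) = poch a k * (a + k) := by
  simp [poch, ascPochhammer_succ_eval]

lemma poch_one (k : ℕ) : poch 1 k = k.factorial := by simp [poch]

lemma poch_pos {a : ℝ} (ha : 0 < a) (k : ℕ) : 0 < poch a k := ascPochhammer_pos k a ha

lemma poch_mul_add (a : ℝ) (k : ℕ) : poch a k * (a + k) = a * poch (a + 1) k := by
  rw [← poch_succ, poch, poch, ascPochhammer_succ_left]
  simp

lemma poch_add_one_ne_zero {a : ℝ} (ha : ∀ k : ℕ, a + k ≠ 0) (k : ℕ) : poch (a + 1) k ≠ 0 := by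
  rw [poch, ne_eq, ascPochhammer_eval_eq_zero_iff]
  rintro ⟨j, -, hj⟩
  refine ha (j + 1) ?_
  push_cast
  linarith

lemma poch_div_poch_add_one {a : ℝ} (ha : ∀ k : ℕ, a + k ≠ 0) (k : ℕ) :
    poch a k / poch (a + 1) k = a / (a + k) := by
  rw [div_eq_div_iff (poch_add_one_ne_zero ha k) (ha k), poch_mul_add]

lemma poch_le_poch {a b : ℝ} (ha : 0 < a) (hab : a ≤ b) (k : ℕ) : poch a k ≤ poch b k := by
  induction k with
  | zero => simp [poch_zero]
  | succ k ih =>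
    rw [poch_succ, poch_succ]
    have := poch_pos (ha.trans_le hab) k
    gcongr

lemma Gamma_add_natCast {a : ℝ} (ha : ∀ k : ℕ, a + k ≠ 0) (k : ℕ) :
    Gamma (a + k) = Gamma a * poch a k := by
  induction k with
  | zero => simp [poch_zero]
  | succ k ih =>
    rw [Nat.cast_succ, ← add_assoc, Gamma_add_one (ha k), ih, poch_succ]
    ring

lemma natCast_add_ne_zero {a : ℝ} (ha : 0 < a) (k : ℕ) : a + k ≠ 0 := by positivity

lemma beta_comm (a b : ℝ) : beta a b = beta b a := by
  rw [beta, beta, mul_comm, add_comm]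

lemma beta_one_right {a : ℝ} (ha : a ≠ 0) (hg : Gamma a ≠ 0) : beta a 1 = 1 / a := by
  rw [beta, Gamma_add_one ha, Gamma_one]
  field_simp

lemma beta_add_natCast {a b : ℝ} (ha : 0 < a) (hb : 0 < b) (k : ℕ) :
    beta (a + k) b = beta a b * (poch a k / poch (a + b) k) := by
  have := Gamma_pos_of_pos (add_pos ha hb)
  have := poch_pos (add_pos ha hb) k
  rw [beta, beta, add_right_comm, Gamma_add_natCast (natCast_add_ne_zero ha),
    Gamma_add_natCast (natCast_add_ne_zero (add_pos ha hb))]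
  field_simp

lemma ofReal_betaIntegrand {x : ℝ} (hx : x ∈ Icc 0 1) (a b : ℝ) :
    (x : ℂ) ^ ((a : ℂ) - 1) * (1 - (x : ℂ)) ^ ((b : ℂ) - 1) =
      ((x ^ (a - 1) * (1 - x) ^ (b - 1) : ℝ) : ℂ) := by
  push_cast [Complex.ofReal_cpow hx.1, Complex.ofReal_cpow (sub_nonneg.2 hx.2)]
  rfl

lemma integrableOn_beta {a b : ℝ} (ha : 0 < a) (hb : 0 < b) :
    IntegrableOn (fun t : ℝ ↦ t ^ (a - 1) * (1 - t) ^ (b - 1)) (Ioo 0 1) := by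
  have h := Complex.betaIntegral_convergent (u := a) (v := b) (by simpa) (by simpa)
  rw [intervalIntegrable_iff_integrableOn_Ioo_of_le zero_le_one] at h
  exact (h.congr_fun (fun x hx ↦ ofReal_betaIntegrand (Ioo_subset_Icc_self hx) a b)
    measurableSet_Ioo).re

lemma integral_beta {a b : ℝ} (ha : 0 < a) (hb : 0 < b) :
    ∫ t in Ioo (0 : ℝ) 1, t ^ (a - 1) * (1 - t) ^ (b - 1) = beta a b := by
  rw [beta_eq_betaIntegralReal a b ha hb, Complex.betaIntegral,
    intervalIntegral.integral_of_le zero_le_one, integral_Ioc_eq_integral_Ioo,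
    setIntegral_congr_fun measurableSet_Ioo fun x hx ↦
      ofReal_betaIntegrand (Ioo_subset_Icc_self hx) a b, integral_complex_ofReal,
    Complex.ofReal_re]

lemma integrableOn_rpow_sub_one {a : ℝ} (ha : 0 < a) :
    IntegrableOn (fun t : ℝ ↦ t ^ (a - 1)) (Ioo 0 1) := by
  simpa using integrableOn_beta ha one_pos

lemma integral_rpow_sub_one {a : ℝ} (ha : 0 < a) :
    ∫ t in Ioo (0 : ℝ) 1, t ^ (a - 1) = 1 / a := by
  simpa [beta_one_right ha.ne' (Gamma_pos_of_pos ha).ne'] using integral_beta ha one_pos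

lemma integrable_uncurry_of_nonneg {α β : Type*} [MeasurableSpace α] [MeasurableSpace β]
    {μ : Measure α} {ν : Measure β} [SFinite ν] {f : α → β → ℝ}
    (hm : AEStronglyMeasurable (Function.uncurry f) (μ.prod ν))
    (h0 : ∀ᵐ x ∂μ, ∀ᵐ y ∂ν, 0 ≤ f x y) (h1 : ∀ᵐ x ∂μ, Integrable (f x) ν)
    (h2 : Integrable (fun x ↦ ∫ y, f x y ∂ν) μ) :
    Integrable (Function.uncurry f) (μ.prod ν) := by
  rw [integrable_prod_iff hm]
  refine ⟨h1, h2.congr ?_⟩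
  filter_upwards [h0] with x hx
  refine integral_congr_ae ?_
  filter_upwards [hx] with y hy
  simp [abs_of_nonneg hy]

lemma hasSum_integral_mul_powerSeries_of_nonneg {w f : ℝ → ℝ} {c : ℕ → ℝ} (hc : ∀ n, 0 ≤ c n)
    (hw : AEStronglyMeasurable w (volume.restrict (Ioo 0 1)))
    (hf : ∀ t ∈ Ioo (0 : ℝ) 1, HasSum (fun n ↦ c n * t ^ n) (f t))
    (hwf : IntegrableOn (fun t ↦ w t * f t) (Ioo 0 1)) :
    HasSum (fun n ↦ c n * ∫ t in Ioo (0 : ℝ) 1, w t * t ^ n)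
      (∫ t in Ioo (0 : ℝ) 1, w t * f t) := by
  have hf0 : ∀ t ∈ Ioo (0 : ℝ) 1, 0 ≤ f t := fun t ht ↦
    (hf t ht).nonneg fun n ↦ mul_nonneg (hc n) (pow_nonneg ht.1.le n)
  have hsum : ∀ t ∈ Ioo (0 : ℝ) 1, HasSum (fun n ↦ |w t| * (c n * t ^ n)) |w t * f t| := by
    intro t ht
    rw [abs_mul, abs_of_nonneg (hf0 t ht)]
    exact (hf t ht).mul_left _
  simp_rw [← integral_const_mul]
  refine hasSum_integral_of_dominated_convergence (fun n t ↦ |w t| * (c n * t ^ n))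
    (fun n ↦ by fun_prop) (fun n ↦ ae_restrict_of_forall_mem measurableSet_Ioo fun t ht ↦ ?_)
    (ae_restrict_of_forall_mem measurableSet_Ioo fun t ht ↦ (hsum t ht).summable)
    (hwf.abs.congr <| ae_restrict_of_forall_mem measurableSet_Ioo fun t ht ↦
      (hsum t ht).tsum_eq.symm)
    (ae_restrict_of_forall_mem measurableSet_Ioo fun t ht ↦ ?_)
  · rw [norm_eq_abs, mul_left_comm, abs_mul,
      abs_of_nonneg (mul_nonneg (hc n) (pow_nonneg ht.1.le n))]
  · simpa only [mul_left_comm] using (hf t ht).mul_left (w t)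

lemma hasSum_integral_mul_powerSeries_of_summable {w f : ℝ → ℝ} {c : ℕ → ℝ}
    (hc : Summable fun n ↦ |c n|) (hw : IntegrableOn w (Ioo 0 1))
    (hf : ∀ t ∈ Ioo (0 : ℝ) 1, HasSum (fun n ↦ c n * t ^ n) (f t)) :
    HasSum (fun n ↦ c n * ∫ t in Ioo (0 : ℝ) 1, w t * t ^ n)
      (∫ t in Ioo (0 : ℝ) 1, w t * f t) := by
  simp_rw [← integral_const_mul]
  have hwm := hw.aestronglyMeasurable
  refine hasSum_integral_of_dominated_convergence (fun n t ↦ |w t| * |c n|)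
    (fun n ↦ by fun_prop) (fun n ↦ ae_restrict_of_forall_mem measurableSet_Ioo fun t ht ↦ ?_)
    (ae_of_all _ fun t ↦ hc.mul_left _) ?_
    (ae_restrict_of_forall_mem measurableSet_Ioo fun t ht ↦ ?_)
  · rw [norm_eq_abs, mul_left_comm, abs_mul, abs_mul (c n), abs_of_nonneg (pow_nonneg ht.1.le n)]
    gcongr
    exact mul_le_of_le_one_right (abs_nonneg _) (pow_le_one₀ ht.1.le ht.2.le)
  · simp_rw [tsum_mul_left]
    exact hw.abs.mul_const _
  · simpa only [mul_left_comm] using (hf t ht).mul_left (w t)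

lemma hyp2F1_comm (a b c z : ℝ) : hyp2F1 a b c z = hyp2F1 b a c z := by
  simp only [hyp2F1, mul_comm (poch a _)]

lemma hyp2F1_eq_ordinaryHypergeometric (a b c z : ℝ) : hyp2F1 a b c z = ₂F₁ a b c z := by
  rw [hyp2F1, ordinaryHypergeometric_eq_tsum]
  refine tsum_congr fun k ↦ ?_
  simp only [poch, smul_eq_mul]
  ring

lemma hasFPowerSeriesOnBall_hyp2F1 {a b c : ℝ} (ha : ∀ k : ℕ, a + k ≠ 0)
    (hb : ∀ k : ℕ, b + k ≠ 0) (hc : ∀ k : ℕ, c + k ≠ 0) :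
    HasFPowerSeriesOnBall (hyp2F1 a b c) (ordinaryHypergeometricSeries ℝ a b c) 0 1 := by
  have hr := ordinaryHypergeometricSeries_radius_eq_one ℝ a b c fun k ↦
    ⟨fun h ↦ ha k (by linarith), fun h ↦ hb k (by linarith), fun h ↦ hc k (by linarith)⟩
  rw [← hr, funext (hyp2F1_eq_ordinaryHypergeometric a b c)]
  exact (ordinaryHypergeometricSeries ℝ a b c).hasFPowerSeriesOnBall (by simp [hr])

lemma mem_eball_zero_one {z : ℝ} (hz : |z| < 1) : z ∈ Metric.eball (0 : ℝ) 1 := by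
  simpa [enorm_eq_nnnorm, ← NNReal.coe_lt_coe] using hz

lemma hasSum_hyp2F1 {a b c z : ℝ} (ha : ∀ k : ℕ, a + k ≠ 0) (hb : ∀ k : ℕ, b + k ≠ 0)
    (hc : ∀ k : ℕ, c + k ≠ 0) (hz : |z| < 1) :
    HasSum (fun k : ℕ ↦ poch a k * poch b k / poch c k / k.factorial * z ^ k)
      (hyp2F1 a b c z) := by
  have h := (hasFPowerSeriesOnBall_hyp2F1 ha hb hc).hasSum (mem_eball_zero_one hz)
  rw [zero_add] at h
  refine h.congr_fun fun k ↦ ?_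
  rw [ordinaryHypergeometricSeries_apply_eq, smul_eq_mul, poch, poch, poch]
  ring

lemma continuousOn_hyp2F1 {a b c : ℝ} (ha : ∀ k : ℕ, a + k ≠ 0) (hb : ∀ k : ℕ, b + k ≠ 0)
    (hc : ∀ k : ℕ, c + k ≠ 0) : ContinuousOn (hyp2F1 a b c) (Ioo 0 1) :=
  (hasFPowerSeriesOnBall_hyp2F1 ha hb hc).continuousOn.mono fun _ hz ↦
    mem_eball_zero_one (abs_lt.2 ⟨by linarith [hz.1], hz.2⟩)

lemma choose_eq_poch_div (a : ℝ) (k : ℕ) : Ring.choose (a + k - 1) k = poch a k / k.factorial := by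
  rw [poch, Ring.choose_eq_smul, Polynomial.descPochhammer_smeval_eq_ascPochhammer,
    show a + k - 1 - k + 1 = a by ring, ← Polynomial.ascPochhammer_smeval_eq_eval]
  simp [div_eq_inv_mul]

lemma hasSum_binomial (a : ℝ) {x : ℝ} (hx : |x| < 1) :
    HasSum (fun k : ℕ ↦ poch a k / k.factorial * x ^ k) ((1 - x) ^ (-a)) := by
  have h := (one_div_one_sub_rpow_hasFPowerSeriesOnBall_zero a).hasSum (mem_eball_zero_one hx)
  simp only [FormalMultilinearSeries.ofScalars_apply_eq, zero_add, choose_eq_poch_div,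
    smul_eq_mul] at h
  rwa [rpow_neg (by linarith [(abs_lt.1 hx).2]), ← one_div]

lemma one_sub_mul_pos {u t : ℝ} (hu : u < 1) (ht : t ∈ Ioo 0 1) : 0 < 1 - u * t := by
  nlinarith [ht.1, ht.2]

/-- The integrand of Euler's integral representation of `₂F₁(a, b; c; u)`. -/
noncomputable def eulerKernel (a b c u t : ℝ) : ℝ :=
  t ^ (b - 1) * (1 - t) ^ (c - b - 1) * (1 - u * t) ^ (-a)

lemma integrableOn_eulerKernel (a : ℝ) {b c u : ℝ} (hb : 0 < b) (hbc : b < c) (hu : u < 1) :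
    IntegrableOn (eulerKernel a b c u) (Ioo 0 1) := by
  rw [← integrableOn_Icc_iff_integrableOn_Ioo]
  refine IntegrableOn.mul_continuousOn ?_ (ContinuousOn.rpow_const (by fun_prop) fun t ht ↦ ?_)
    isCompact_Icc
  · rw [integrableOn_Icc_iff_integrableOn_Ioo]
    exact integrableOn_beta hb (sub_pos.2 hbc)
  · rcases ht.1.eq_or_lt with rfl | ht0
    · simp
    · left
      nlinarith [ht.2]

lemma integral_beta_mul_pow {a b : ℝ} (ha : 0 < a) (hb : 0 < b) (n : ℕ) :
    ∫ t in Ioo (0 : ℝ) 1, t ^ (a - 1) * (1 - t) ^ (b - 1) * t ^ n =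
      beta a b * (poch a n / poch (a + b) n) := by
  rw [← beta_add_natCast ha hb, ← integral_beta (by positivity) hb]
  refine setIntegral_congr_fun measurableSet_Ioo fun t ht ↦ ?_
  rw [add_sub_right_comm, rpow_add_natCast ht.1.ne']
  ring

theorem integral_eulerKernel {a b c u : ℝ} (ha : 0 < a) (hb : 0 < b) (hbc : b < c)
    (hu : u ∈ Ico 0 1) :
    ∫ t in Ioo (0 : ℝ) 1, eulerKernel a b c u t = beta b (c - b) * hyp2F1 a b c u := by
  have h := hasSum_integral_mul_powerSeries_of_nonneg
    (w := fun t ↦ t ^ (b - 1) * (1 - t) ^ (c - b - 1)) (f := fun t ↦ (1 - u * t) ^ (-a))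
    (c := fun n ↦ poch a n / n.factorial * u ^ n)
    (fun n ↦ mul_nonneg (div_nonneg (poch_pos ha n).le (Nat.cast_nonneg _)) (pow_nonneg hu.1 n))
    (by fun_prop) (fun t ht ↦ ?_) (integrableOn_eulerKernel a hb hbc hu.2)
  · simp_rw [integral_beta_mul_pow hb (sub_pos.2 hbc), add_sub_cancel] at h
    refine h.tsum_eq.symm.trans ?_
    rw [hyp2F1, ← tsum_mul_left]
    refine tsum_congr fun k ↦ ?_
    ring
  · have hut : |u * t| < 1 := by
      rw [abs_of_nonneg (mul_nonneg hu.1 ht.1.le)]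
      linarith [one_sub_mul_pos hu.2 ht]
    simpa only [mul_pow, mul_assoc] using hasSum_binomial a hut

/-- The substitution `t ↦ (1 - t) / (1 - u t)` behind Euler's transformation of `₂F₁`: an involution
of the unit interval. -/
noncomputable def eulerInvolution (u t : ℝ) : ℝ := (1 - t) / (1 - u * t)

lemma one_sub_eulerInvolution {u t : ℝ} (hu : u < 1) (ht : t ∈ Ioo 0 1) :
    1 - eulerInvolution u t = t * (1 - u) / (1 - u * t) := by
  have hut := (one_sub_mul_pos hu ht).ne'
  rw [eulerInvolution, eq_div_iff hut, sub_mul, div_mul_cancel₀ _ hut]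
  ring

lemma one_sub_mul_eulerInvolution {u t : ℝ} (hu : u < 1) (ht : t ∈ Ioo 0 1) :
    1 - u * eulerInvolution u t = (1 - u) / (1 - u * t) := by
  have hut := (one_sub_mul_pos hu ht).ne'
  rw [eulerInvolution, eq_div_iff hut, sub_mul, mul_assoc, div_mul_cancel₀ _ hut]
  ring

lemma eulerInvolution_mem_Ioo {u t : ℝ} (hu : u < 1) (ht : t ∈ Ioo 0 1) :
    eulerInvolution u t ∈ Ioo 0 1 := by
  have hut := one_sub_mul_pos hu ht
  refine ⟨div_pos (sub_pos.2 ht.2) hut, sub_pos.1 ?_⟩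
  rw [one_sub_eulerInvolution hu ht]
  exact div_pos (mul_pos ht.1 (sub_pos.2 hu)) hut

lemma eulerInvolution_eulerInvolution {u t : ℝ} (hu : u < 1) (ht : t ∈ Ioo 0 1) :
    eulerInvolution u (eulerInvolution u t) = t := by
  have hu' : 1 - u ≠ 0 := (sub_pos.2 hu).ne'
  rw [eulerInvolution, one_sub_eulerInvolution hu ht, one_sub_mul_eulerInvolution hu ht,
    div_div_div_cancel_right₀ (one_sub_mul_pos hu ht).ne', mul_div_cancel_right₀ _ hu']

lemma invOn_eulerInvolution {u : ℝ} (hu : u < 1) :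
    InvOn (eulerInvolution u) (eulerInvolution u) (Ioo 0 1) (Ioo 0 1) :=
  ⟨fun _ ↦ eulerInvolution_eulerInvolution hu, fun _ ↦ eulerInvolution_eulerInvolution hu⟩

lemma bijOn_eulerInvolution {u : ℝ} (hu : u < 1) :
    BijOn (eulerInvolution u) (Ioo 0 1) (Ioo 0 1) :=
  (invOn_eulerInvolution hu).bijOn (fun _ ↦ eulerInvolution_mem_Ioo hu)
    fun _ ↦ eulerInvolution_mem_Ioo hu

lemma hasDerivAt_eulerInvolution {u t : ℝ} (hu : u < 1) (ht : t ∈ Ioo 0 1) :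
    HasDerivAt (eulerInvolution u) (-(1 - u) / (1 - u * t) ^ 2) t := by
  have hnum : HasDerivAt (fun t : ℝ ↦ 1 - t) (-1) t := by
    simpa using (hasDerivAt_id t).const_sub 1
  have hden : HasDerivAt (fun t : ℝ ↦ 1 - u * t) (-u) t := by
    simpa using ((hasDerivAt_id t).const_mul u).const_sub 1
  refine (hnum.div hden (one_sub_mul_pos hu ht).ne').congr_deriv ?_
  ring

lemma eulerKernel_eulerInvolution (a b c : ℝ) {u t : ℝ} (hu : u < 1) (ht : t ∈ Ioo 0 1) :
    (1 - u) / (1 - u * t) ^ 2 * eulerKernel a b c u (eulerInvolution u t) =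
      (1 - u) ^ (c - a - b) * eulerKernel (c - a) (c - b) c u t := by
  have ht' := sub_pos.2 ht.2
  have hu' := sub_pos.2 hu
  have hut := one_sub_mul_pos hu ht
  have hpow : (1 - u * t) ^ (b - 1) * (1 - u * t) ^ (c - b - 1) * (1 - u * t) ^ (-a) *
      (1 - u * t) ^ 2 = (1 - u * t) ^ (c - a) := by
    rw [← rpow_two, ← rpow_add hut, ← rpow_add hut, ← rpow_add hut]
    congr 1
    ring
  have hpow' : (1 - u) * (1 - u) ^ (c - b - 1) * (1 - u) ^ (-a) = (1 - u) ^ (c - a - b) := by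
    nth_rw 1 [← rpow_one (1 - u)]
    rw [← rpow_add hu', ← rpow_add hu']
    congr 1
    ring
  rw [eulerKernel, one_sub_eulerInvolution hu ht, one_sub_mul_eulerInvolution hu ht,
    eulerInvolution, div_rpow ht'.le hut.le, div_rpow (by positivity [ht.1]) hut.le,
    div_rpow hu'.le hut.le, mul_rpow ht.1.le hu'.le, eulerKernel, ← hpow', rpow_neg hut.le (c - a),
    ← hpow, sub_sub_cancel, sub_right_comm c b 1]
  have hne (r : ℝ) : (1 - u * t) ^ r ≠ 0 := (rpow_pos_of_pos hut r).ne'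
  have hb := hne (b - 1)
  have ha := hne (-a)
  field_simp

theorem integral_eulerKernel_eq_rpow_mul (a b c : ℝ) {u : ℝ} (hu : u < 1) :
    ∫ t in Ioo (0 : ℝ) 1, eulerKernel a b c u t =
      (1 - u) ^ (c - a - b) * ∫ t in Ioo (0 : ℝ) 1, eulerKernel (c - a) (c - b) c u t := by
  have hbij := bijOn_eulerInvolution hu
  have key := integral_image_eq_integral_abs_deriv_smul measurableSet_Ioo
    (fun t ht ↦ (hasDerivAt_eulerInvolution hu ht).hasDerivWithinAt) hbij.injOn
    (eulerKernel a b c u)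
  rw [hbij.image_eq] at key
  rw [key, ← integral_const_mul]
  refine setIntegral_congr_fun measurableSet_Ioo fun t ht ↦ ?_
  have hut := one_sub_mul_pos hu ht
  rw [← eulerKernel_eulerInvolution a b c hu ht, smul_eq_mul, neg_div, abs_neg,
    abs_of_pos (div_pos (sub_pos.2 hu) (pow_pos hut 2))]

theorem hyp2F1_eq_rpow_mul_hyp2F1 {a b c u : ℝ} (ha : 0 < a) (hac : a < c) (hb : 0 < b)
    (hbc : b < c) (hu : u ∈ Ico 0 1) :
    hyp2F1 a b c u = (1 - u) ^ (c - a - b) * hyp2F1 (c - a) (c - b) c u := by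
  have h := integral_eulerKernel_eq_rpow_mul a b c hu.2
  rw [integral_eulerKernel ha hb hbc hu, integral_eulerKernel (sub_pos.2 hac) (sub_pos.2 hbc)
    (sub_lt_self c hb) hu, sub_sub_cancel, beta_comm (c - b), mul_left_comm] at h
  exact mul_left_cancel₀ (beta_pos hb (sub_pos.2 hbc)).ne' h

lemma hyp2F1_coeff_nonneg {a b c : ℝ} (ha : 0 < a) (hb : 0 < b) (hc : 0 < c) (k : ℕ) :
    0 ≤ poch a k * poch b k / poch c k / k.factorial := by
  have := poch_pos ha k
  have := poch_pos hb k
  have := poch_pos hc k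
  positivity

lemma hyp2F1_coeff_le {a b c : ℝ} (ha : 0 < a) (hb : 0 < b) (hbc : b ≤ c) (k : ℕ) :
    poch a k * poch b k / poch c k / k.factorial ≤ poch a k / k.factorial := by
  have := (poch_pos ha k).le
  have := (poch_pos (hb.trans_le hbc) k).le
  gcongr
  exact div_le_of_le_mul₀ ‹_› ‹_› (by gcongr; exact poch_le_poch hb hbc k)

lemma hyp2F1_nonneg {a b c u : ℝ} (ha : 0 < a) (hb : 0 < b) (hc : 0 < c) (hu : u ∈ Ico 0 1) :
    0 ≤ hyp2F1 a b c u :=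
  (hasSum_hyp2F1 (natCast_add_ne_zero ha) (natCast_add_ne_zero hb) (natCast_add_ne_zero hc)
    (abs_lt.2 ⟨by linarith [hu.1], hu.2⟩)).nonneg fun k ↦
      mul_nonneg (hyp2F1_coeff_nonneg ha hb hc k) (pow_nonneg hu.1 k)

lemma hyp2F1_le_rpow {a b c u : ℝ} (ha : 0 < a) (hb : 0 < b) (hbc : b ≤ c) (hu : u ∈ Ico 0 1) :
    hyp2F1 a b c u ≤ (1 - u) ^ (-a) := by
  have hu' : |u| < 1 := abs_lt.2 ⟨by linarith [hu.1], hu.2⟩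
  exact hasSum_le (fun k ↦ mul_le_mul_of_nonneg_right (hyp2F1_coeff_le ha hb hbc k)
      (pow_nonneg hu.1 k))
    (hasSum_hyp2F1 (natCast_add_ne_zero ha) (natCast_add_ne_zero hb)
      (natCast_add_ne_zero (hb.trans_le hbc)) hu') (hasSum_binomial a hu')

lemma aestronglyMeasurable_hyp2F1 {a b c : ℝ} (ha : 0 < a) (hb : 0 < b) (hc : 0 < c) :
    AEStronglyMeasurable (hyp2F1 a b c) (volume.restrict (Ioo 0 1)) :=
  (continuousOn_hyp2F1 (natCast_add_ne_zero ha) (natCast_add_ne_zero hb)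
    (natCast_add_ne_zero hc)).aestronglyMeasurable measurableSet_Ioo

lemma integrableOn_rpow_mul_hyp2F1 {a b c g : ℝ} (ha : 0 < a) (ha1 : a < 1) (hb : 0 < b)
    (hbc : b ≤ c) (hg : 0 < g) :
    IntegrableOn (fun t ↦ t ^ (g - 1) * hyp2F1 a b c t) (Ioo 0 1) := by
  have hc := hb.trans_le hbc
  have hmeas := aestronglyMeasurable_hyp2F1 ha hb hc
  refine (integrableOn_beta hg (sub_pos.2 ha1)).mono' (by fun_prop)
    (ae_restrict_of_forall_mem measurableSet_Ioo fun t ht ↦ ?_)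
  have hpow := rpow_nonneg ht.1.le (g - 1)
  rw [norm_of_nonneg (mul_nonneg hpow (hyp2F1_nonneg ha hb hc (Ioo_subset_Ico_self ht))),
    sub_sub_cancel_left]
  exact mul_le_mul_of_nonneg_left (hyp2F1_le_rpow ha hb hbc (Ioo_subset_Ico_self ht)) hpow

lemma integrableOn_hyp2F1 {a b c : ℝ} (ha : 0 < a) (ha1 : a < 1) (hb : 0 < b) (hbc : b ≤ c) :
    IntegrableOn (hyp2F1 a b c) (Ioo 0 1) := by
  simpa only [sub_self, rpow_zero, one_mul] using
    integrableOn_rpow_mul_hyp2F1 ha ha1 hb hbc one_pos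

lemma integral_rpow_sub_one_mul_pow {g : ℝ} (hg : 0 < g) (n : ℕ) :
    ∫ t in Ioo (0 : ℝ) 1, t ^ (g - 1) * t ^ n = 1 / (g + n) := by
  rw [← integral_rpow_sub_one (by positivity)]
  refine setIntegral_congr_fun measurableSet_Ioo fun t ht ↦ ?_
  rw [add_sub_right_comm, rpow_add_natCast ht.1.ne']

theorem integral_rpow_mul_hyp2F1 {a b c g : ℝ} (ha : 0 < a) (hb : 0 < b) (hc : 0 < c)
    (hg : 0 < g) (hint : IntegrableOn (fun t ↦ t ^ (g - 1) * hyp2F1 a b c t) (Ioo 0 1)) :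
    ∫ t in Ioo (0 : ℝ) 1, t ^ (g - 1) * hyp2F1 a b c t = hyp3F2 a b g c (g + 1) 1 / g := by
  have h := hasSum_integral_mul_powerSeries_of_nonneg (w := fun t ↦ t ^ (g - 1))
    (hyp2F1_coeff_nonneg ha hb hc) (by fun_prop)
    (fun t ht ↦ hasSum_hyp2F1 (natCast_add_ne_zero ha) (natCast_add_ne_zero hb)
      (natCast_add_ne_zero hc) (abs_lt.2 ⟨by linarith [ht.1], ht.2⟩)) hint
  simp_rw [integral_rpow_sub_one_mul_pow hg] at h
  rw [← h.tsum_eq, hyp3F2, ← tsum_div_const]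
  refine tsum_congr fun k ↦ ?_
  rw [mul_div_mul_comm, poch_div_poch_add_one (natCast_add_ne_zero hg)]
  field_simp
  simp

section Thomae

variable {a b c g : ℝ}

lemma integral_rpow_mul_eulerKernel (ha : 0 < a) (hac : a < c) (hb : 0 < b) (hbc : b < c) {u : ℝ}
    (hu : u ∈ Ico 0 1) :
    ∫ x in Ioo (0 : ℝ) 1, u ^ (g - 1) * (1 - u) ^ (c - a - b) * eulerKernel (c - b) (c - a) c u x =
      beta (c - a) a * (u ^ (g - 1) * hyp2F1 a b c u) := by
  rw [integral_const_mul, integral_eulerKernel (sub_pos.2 hbc) (sub_pos.2 hac) (sub_lt_self c ha)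
    hu, hyp2F1_eq_rpow_mul_hyp2F1 ha hac hb hbc hu, sub_sub_cancel, hyp2F1_comm (c - b)]
  ring

lemma integrable_rpow_mul_eulerKernel (ha : 0 < a) (ha1 : a < 1) (hac : a < c) (hb : 0 < b)
    (hbc : b < c) (hg : 0 < g) :
    Integrable (Function.uncurry fun u x : ℝ ↦
      u ^ (g - 1) * (1 - u) ^ (c - a - b) * eulerKernel (c - b) (c - a) c u x)
      ((volume.restrict (Ioo 0 1)).prod (volume.restrict (Ioo 0 1))) := by
  refine integrable_uncurry_of_nonneg (by unfold eulerKernel; fun_prop) ?_ ?_ ?_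
  · refine ae_restrict_of_forall_mem measurableSet_Ioo fun u hu ↦
      ae_restrict_of_forall_mem measurableSet_Ioo fun x hx ↦ ?_
    have := hu.1
    have := hx.1
    have := sub_pos.2 hu.2
    have := sub_pos.2 hx.2
    have := one_sub_mul_pos hu.2 hx
    rw [eulerKernel]
    positivity
  · refine ae_restrict_of_forall_mem measurableSet_Ioo fun u hu ↦ Integrable.const_mul ?_ _
    exact integrableOn_eulerKernel _ (sub_pos.2 hac) (sub_lt_self c ha) hu.2
  · refine ((integrableOn_rpow_mul_hyp2F1 ha ha1 hb hbc.le hg).const_mul (beta (c - a) a)).congr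
      (ae_restrict_of_forall_mem measurableSet_Ioo fun u hu ↦ ?_)
    exact (integral_rpow_mul_eulerKernel ha hac hb hbc (Ioo_subset_Ico_self hu)).symm

lemma integral_rpow_mul_eulerKernel_swap (ha1 : a < 1) (hbc : b < c) (hg : 0 < g) {x : ℝ}
    (hx : x ∈ Ioo 0 1) :
    ∫ u in Ioo (0 : ℝ) 1, u ^ (g - 1) * (1 - u) ^ (c - a - b) * eulerKernel (c - b) (c - a) c u x =
      beta g (c - a - b + 1) * (x ^ (c - a - 1) *
        hyp2F1 (g + 1 - a) (c - a - b + 1) (g + (c - a - b + 1)) x) := by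
  have hx1 := sub_pos.2 hx.2
  have hsymm : ∀ u : ℝ, u ^ (g - 1) * (1 - u) ^ (c - a - b) * eulerKernel (c - b) (c - a) c u x =
      x ^ (c - a - 1) * (1 - x) ^ (a - 1) * eulerKernel (c - b) g (g + (c - a - b + 1)) x u := by
    intro u
    rw [eulerKernel, eulerKernel, sub_sub_cancel, add_sub_cancel_left, add_sub_cancel_right,
      mul_comm u x]
    ring
  have hcancel : (1 - x) ^ (a - 1) * (1 - x) ^ (1 - a) = 1 := by
    rw [← rpow_add hx1, sub_add_sub_cancel, sub_self, rpow_zero]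
  simp_rw [hsymm]
  rw [integral_const_mul, integral_eulerKernel (sub_pos.2 hbc) hg (by linarith)
    (Ioo_subset_Ico_self hx), hyp2F1_eq_rpow_mul_hyp2F1 (sub_pos.2 hbc) (by linarith) hg
    (by linarith) (Ioo_subset_Ico_self hx), add_sub_cancel_left,
    show g + (c - a - b + 1) - (c - b) - g = 1 - a by ring,
    show g + (c - a - b + 1) - (c - b) = g + 1 - a by ring]
  linear_combination x ^ (c - a - 1) * beta g (c - a - b + 1) *
    hyp2F1 (g + 1 - a) (c - a - b + 1) (g + (c - a - b + 1)) x * hcancel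

/-- The case of Thomae's transformation of `₃F₂` at `1` in which a numerator parameter `g` lies one
below a denominator parameter `g + 1`. -/
theorem hyp3F2_thomae (ha : 0 < a) (ha1 : a < 1) (hac : a < c) (hb : 0 < b) (hbc : b < c)
    (hg : 0 < g) :
    beta (c - a) a * (hyp3F2 a b g c (g + 1) 1 / g) = beta g (c - a - b + 1) *
      (hyp3F2 (g + 1 - a) (c - a - b + 1) (c - a) (g + (c - a - b + 1)) (c - a + 1) 1 /
        (c - a)) := by
  have hs : 0 < c - a - b + 1 := by linarith
  have hβ := beta_pos hg hs
  have hint := integrable_rpow_mul_eulerKernel ha ha1 hac hb hbc hg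
  have hright : IntegrableOn (fun x ↦ x ^ (c - a - 1) *
      hyp2F1 (g + 1 - a) (c - a - b + 1) (g + (c - a - b + 1)) x) (Ioo 0 1) := by
    refine (integrable_const_mul_iff (isUnit_iff_ne_zero.2 hβ.ne') _).1 ?_
    exact hint.integral_prod_right.congr (ae_restrict_of_forall_mem measurableSet_Ioo fun x hx ↦
      integral_rpow_mul_eulerKernel_swap ha1 hbc hg hx)
  rw [← integral_rpow_mul_hyp2F1 ha hb (hb.trans hbc) hg
      (integrableOn_rpow_mul_hyp2F1 ha ha1 hb hbc.le hg),
    ← integral_rpow_mul_hyp2F1 (by linarith) hs (by linarith) (sub_pos.2 hac) hright,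
    ← integral_const_mul, ← integral_const_mul]
  calc _ = ∫ u in Ioo (0 : ℝ) 1, ∫ x in Ioo (0 : ℝ) 1,
        u ^ (g - 1) * (1 - u) ^ (c - a - b) * eulerKernel (c - b) (c - a) c u x :=
        setIntegral_congr_fun measurableSet_Ioo fun u hu ↦
          (integral_rpow_mul_eulerKernel ha hac hb hbc (Ioo_subset_Ico_self hu)).symm
    _ = ∫ x in Ioo (0 : ℝ) 1, ∫ u in Ioo (0 : ℝ) 1,
        u ^ (g - 1) * (1 - u) ^ (c - a - b) * eulerKernel (c - b) (c - a) c u x :=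
        integral_integral_swap hint
    _ = _ := setIntegral_congr_fun measurableSet_Ioo fun x hx ↦
          integral_rpow_mul_eulerKernel_swap ha1 hbc hg hx

end Thomae

lemma hasSum_poch_div_of_pos {a z : ℝ} (ha : 0 < a) (ha1 : a < 1) (hz : 0 < z) :
    HasSum (fun k : ℕ ↦ poch a k / k.factorial / (z + k)) (beta z (1 - a)) := by
  have h := hasSum_integral_mul_powerSeries_of_nonneg (w := fun t ↦ t ^ (z - 1))
    (fun n ↦ div_nonneg (poch_pos ha n).le (Nat.cast_nonneg n.factorial)) (by fun_prop)
    (fun t ht ↦ hasSum_binomial a (abs_lt.2 ⟨by linarith [ht.1], ht.2⟩))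
    (by simpa using integrableOn_beta hz (sub_pos.2 ha1))
  simp_rw [integral_rpow_sub_one_mul_pow hz, mul_one_div] at h
  rw [← integral_beta hz (sub_pos.2 ha1), sub_sub_cancel_left]
  exact h

lemma beta_one_left {b : ℝ} (hb : 0 < b) : beta 1 b = 1 / b := by
  rw [beta_comm, beta_one_right hb.ne' (Gamma_pos_of_pos hb).ne']

lemma poch_succ_div_factorial (a : ℝ) (k : ℕ) :
    poch a (k + 1) / (k + 1).factorial = poch a k / k.factorial * ((a + k) / (1 + k)) := by
  rw [poch_succ, Nat.factorial_succ]
  push_cast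
  field_simp
  ring

lemma tendsto_poch_div_factorial {a : ℝ} (ha : 0 < a) (ha1 : a < 1) :
    Tendsto (fun k : ℕ ↦ poch a k / k.factorial) atTop (𝓝 0) := by
  have hsum := (hasSum_poch_div_of_pos ha ha1 one_pos).mul_left (1 - a)
  rw [beta_one_left (sub_pos.2 ha1), mul_one_div_cancel (sub_pos.2 ha1).ne'] at hsum
  have hlim := hsum.tendsto_sum_nat.const_sub 1
  rw [sub_self] at hlim
  refine hlim.congr fun n ↦ ?_
  induction n with
  | zero => simp [poch_zero]
  | succ n ih =>
    rw [Finset.sum_range_succ, ← sub_sub, ih, poch_succ_div_factorial]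
    field_simp
    ring

lemma mul_beta_add_one {a b : ℝ} (ha : a ≠ 0) : (a + b) * beta (a + 1) b = a * beta a b := by
  rw [beta, beta, add_right_comm, Gamma_add_one ha]
  rcases eq_or_ne (a + b) 0 with hab | hab
  · simp [hab, Gamma_zero]
  · rw [Gamma_add_one hab]
    field_simp

lemma hasSum_poch_div_of_add_one {a z : ℝ} (ha : 0 < a) (ha1 : a < 1) (hz : ∀ k : ℕ, z + k ≠ 0)
    (h : HasSum (fun k : ℕ ↦ poch a k / k.factorial / (z + 1 + k)) (beta (z + 1) (1 - a))) :
    HasSum (fun k : ℕ ↦ poch a k / k.factorial / (z + k)) (beta z (1 - a)) := by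
  have hz0 : z ≠ 0 := by simpa using hz 0
  have hz1 (k : ℕ) : z + 1 + k ≠ 0 := by
    convert hz (k + 1) using 1
    push_cast
    ring
  have hpartial (n : ℕ) : z * ∑ k ∈ Finset.range n, poch a k / k.factorial / (z + k) =
      (z + (1 - a)) * ∑ k ∈ Finset.range n, poch a k / k.factorial / (z + 1 + k) +
        n / (n + z) * (poch a n / n.factorial) := by
    induction n with
    | zero => simp
    | succ n ih =>
      have h₀ := hz n
      have h₁ := hz1 n
      rw [Finset.sum_range_succ, Finset.sum_range_succ, mul_add, ih, poch_succ_div_factorial,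
        mul_add, Nat.cast_succ, show (n : ℝ) + 1 + z = z + 1 + n by ring, add_comm (n : ℝ) z]
      field_simp
      ring
  have hratio : Tendsto (fun k : ℕ ↦ (z + 1 + k) / (z + k)) cofinite (𝓝 1) := by
    rw [Nat.cofinite_eq_atTop]
    simpa using tendsto_add_mul_div_add_mul_atTop_nhds (z + 1) z 1 one_ne_zero
  have hsum : Summable fun k : ℕ ↦ poch a k / k.factorial / (z + k) := by
    refine (h.summable.norm.mul_tendsto_const hratio).congr fun k ↦ ?_
    rw [div_mul_div_cancel₀ (hz1 k)]
  have hlim := (h.tendsto_sum_nat.const_mul (z + (1 - a))).add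
    ((tendsto_natCast_div_add_atTop z).mul (tendsto_poch_div_factorial ha ha1))
  have hz_mul := tendsto_nhds_unique (hsum.hasSum.tendsto_sum_nat.const_mul z)
    (hlim.congr fun n ↦ (hpartial n).symm)
  rw [mul_zero, add_zero, mul_beta_add_one hz0] at hz_mul
  rw [← mul_left_cancel₀ hz0 hz_mul]
  exact hsum.hasSum

theorem hasSum_poch_div {a z : ℝ} (ha : 0 < a) (ha1 : a < 1) (hz : ∀ k : ℕ, z + k ≠ 0) :
    HasSum (fun k : ℕ ↦ poch a k / k.factorial / (z + k)) (beta z (1 - a)) := by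
  obtain ⟨n, hn⟩ := exists_nat_gt (-z)
  induction n generalizing z with
  | zero =>
    exact hasSum_poch_div_of_pos ha ha1 (by simpa using hn)
  | succ n ih =>
    refine hasSum_poch_div_of_add_one ha ha1 hz (ih (fun k ↦ ?_) ?_)
    · convert hz (k + 1) using 1
      push_cast
      ring
    · push_cast at hn
      linarith

section ContiguousDenominator

variable {a b : ℝ}

lemma hyp2F1_add_one_coeff (hb : ∀ k : ℕ, b + k ≠ 0) (k : ℕ) :
    poch a k * poch b k / poch (b + 1) k / k.factorial =
      b * (poch a k / k.factorial / (b + k)) := by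
  rw [mul_div_assoc, poch_div_poch_add_one hb]
  ring

lemma summable_abs_hyp2F1_add_one_coeff (ha : 0 < a) (ha1 : a < 1) (hb : ∀ k : ℕ, b + k ≠ 0) :
    Summable fun k : ℕ ↦ |b * (poch a k / k.factorial / (b + k))| :=
  ((hasSum_poch_div ha ha1 hb).summable.mul_left b).abs

lemma abs_mul_pow_le {c u : ℝ} (hu : u ∈ Icc 0 1) (k : ℕ) : |c * u ^ k| ≤ |c| := by
  rw [abs_mul, abs_of_nonneg (pow_nonneg hu.1 k)]
  exact mul_le_of_le_one_right (abs_nonneg c) (pow_le_one₀ hu.1 hu.2)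

lemma hasSum_hyp2F1_add_one (ha : 0 < a) (ha1 : a < 1) (hb : ∀ k : ℕ, b + k ≠ 0) {u : ℝ}
    (hu : u ∈ Icc 0 1) :
    HasSum (fun k : ℕ ↦ b * (poch a k / k.factorial / (b + k)) * u ^ k)
      (hyp2F1 a b (b + 1) u) := by
  have hsum : Summable fun k : ℕ ↦ b * (poch a k / k.factorial / (b + k)) * u ^ k :=
    (summable_abs_hyp2F1_add_one_coeff ha ha1 hb).of_norm_bounded fun k ↦ abs_mul_pow_le hu k
  convert! hsum.hasSum using 1
  refine tsum_congr fun k ↦ ?_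
  rw [← hyp2F1_add_one_coeff hb]
  ring

lemma continuousOn_hyp2F1_add_one (ha : 0 < a) (ha1 : a < 1) (hb : ∀ k : ℕ, b + k ≠ 0) :
    ContinuousOn (hyp2F1 a b (b + 1)) (Icc 0 1) := by
  refine ContinuousOn.congr ?_ fun u hu ↦ (hasSum_hyp2F1_add_one ha ha1 hb hu).tsum_eq.symm
  exact continuousOn_tsum (fun k ↦ by fun_prop) (summable_abs_hyp2F1_add_one_coeff ha ha1 hb)
    fun k u hu ↦ abs_mul_pow_le hu k

theorem integral_rpow_mul_hyp2F1_add_one (ha : 0 < a) (ha1 : a < 1) (hb : ∀ k : ℕ, b + k ≠ 0)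
    {r : ℝ} (hr : 0 < r) (hrb : r - b ≠ 0) :
    ∫ t in Ioo (0 : ℝ) 1, t ^ (r - 1) * hyp2F1 a b (b + 1) t =
      b * (beta b (1 - a) - beta r (1 - a)) / (r - b) := by
  have h := hasSum_integral_mul_powerSeries_of_summable
    (summable_abs_hyp2F1_add_one_coeff ha ha1 hb) (integrableOn_rpow_sub_one hr)
    fun t ht ↦ hasSum_hyp2F1_add_one ha ha1 hb (Ioo_subset_Icc_self ht)
  have h' := (((hasSum_poch_div ha ha1 hb).sub
    (hasSum_poch_div ha ha1 (natCast_add_ne_zero hr))).mul_left b).div_const (r - b)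
  refine h.unique (h'.congr_fun fun k ↦ ?_)
  have hbk := hb k
  have hrk := natCast_add_ne_zero hr k
  rw [integral_rpow_sub_one_mul_pow hr]
  field_simp
  ring

variable {α β γ : ℝ}

lemma summable_hyp2F1_coeff_div (hα : 0 < α) (hα1 : α < 1) (hβ : 0 < β) (hβγ : β ≤ γ) {z : ℝ}
    (hz : ∀ k : ℕ, z + k ≠ 0) :
    Summable fun k : ℕ ↦ poch α k * poch β k / poch γ k / k.factorial / (z + k) := by
  refine (hasSum_poch_div hα hα1 hz).summable.abs.of_norm_bounded fun k ↦ ?_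
  have h₀ := hyp2F1_coeff_nonneg hα hβ (hβ.trans_le hβγ) k
  have hle := hyp2F1_coeff_le hα hβ hβγ k
  rw [norm_eq_abs, abs_div _ (z + (k : ℝ)), abs_div _ (z + (k : ℝ)), abs_of_nonneg h₀,
    abs_of_nonneg (h₀.trans hle)]
  gcongr

lemma tsum_hyp2F1_coeff_div {z : ℝ} (hz : ∀ k : ℕ, z + k ≠ 0) :
    ∑' k : ℕ, poch α k * poch β k / poch γ k / k.factorial / (z + k) =
      hyp3F2 α β z γ (z + 1) 1 / z := by
  rw [hyp3F2, ← tsum_div_const]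
  refine tsum_congr fun k ↦ ?_
  have hz0 : z ≠ 0 := by simpa using hz 0
  rw [mul_div_mul_comm, poch_div_poch_add_one hz, one_pow]
  field_simp

lemma beta_one_add_natCast (ha1 : a < 1) (k : ℕ) :
    beta (1 + k) (1 - a) = k.factorial / poch (2 - a) k / (1 - a) := by
  have ha' := sub_pos.2 ha1
  rw [beta_add_natCast one_pos ha', beta_one_left ha', poch_one, ← add_sub_assoc,
    one_add_one_eq_two]
  ring

lemma abs_beta_one_add_natCast_le (ha1 : a < 1) (k : ℕ) :
    |beta (1 + k) (1 - a)| ≤ 1 / (1 - a) := by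
  have ha' := sub_pos.2 ha1
  have hpos := poch_pos (show 0 < 2 - a by linarith) k
  rw [abs_of_pos (beta_pos (by positivity) ha'), beta_one_add_natCast ha1, ← poch_one]
  gcongr
  exact (div_le_one hpos).2 (poch_le_poch one_pos (by linarith) k)

lemma tsum_hyp2F1_coeff_mul_beta_div (ha1 : a < 1) {z : ℝ} (hz : ∀ k : ℕ, z + k ≠ 0) :
    ∑' k : ℕ, poch α k * poch β k / poch γ k / k.factorial / (z + k) * beta (1 + k) (1 - a) =
      hyp4F3 1 α z β (2 - a) (z + 1) γ 1 / (z * (1 - a)) := by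
  rw [hyp4F3, ← tsum_div_const]
  refine tsum_congr fun k ↦ ?_
  have hz0 : z ≠ 0 := by simpa using hz 0
  have hcoeff : poch 1 k * poch α k * poch z k * poch β k /
      (poch (2 - a) k * poch (z + 1) k * poch γ k) =
      poch 1 k * poch α k * poch β k / (poch (2 - a) k * poch γ k) *
        (poch z k / poch (z + 1) k) := by ring
  rw [beta_one_add_natCast ha1, hcoeff, poch_div_poch_add_one hz, one_pow, poch_one]
  field_simp

lemma summable_hyp2F1_coeff_mul_beta_div (ha1 : a < 1) (hα : 0 < α) (hα1 : α < 1)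
    (hβ : 0 < β) (hβγ : β ≤ γ) {z : ℝ} (hz : ∀ k : ℕ, z + k ≠ 0) :
    Summable fun k : ℕ ↦
      poch α k * poch β k / poch γ k / k.factorial / (z + k) * beta (1 + k) (1 - a) := by
  refine ((summable_hyp2F1_coeff_div hα hα1 hβ hβγ hz).abs.mul_right
    (1 / (1 - a))).of_norm_bounded fun k ↦ ?_
  rw [norm_mul]
  exact mul_le_mul_of_nonneg_left (abs_beta_one_add_natCast_le ha1 k) (abs_nonneg _)

theorem integral_hyp2F1_add_one_mul_hyp2F1 (ha : 0 < a) (ha1 : a < 1) (hb : ∀ k : ℕ, b + k ≠ 0)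
    (hb1 : ∀ k : ℕ, 1 - b + k ≠ 0) (hα : 0 < α) (hα1 : α < 1) (hβ : 0 < β) (hβγ : β ≤ γ) :
    ∫ u in Ioo (0 : ℝ) 1, hyp2F1 a b (b + 1) u * hyp2F1 α β γ u =
      b / (1 - b) * (beta b (1 - a) * hyp3F2 α β (1 - b) γ (1 - b + 1) 1 -
        hyp4F3 1 α (1 - b) β (2 - a) (1 - b + 1) γ 1 / (1 - a)) := by
  have hγ := hβ.trans_le hβγ
  have hcont := continuousOn_hyp2F1_add_one ha ha1 hb
  have hint := integrableOn_hyp2F1 hα hα1 hβ hβγ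
  have hprod : IntegrableOn (fun u ↦ hyp2F1 a b (b + 1) u * hyp2F1 α β γ u) (Ioo 0 1) := by
    rw [← integrableOn_Icc_iff_integrableOn_Ioo] at hint ⊢
    exact hint.continuousOn_mul hcont isCompact_Icc
  have hmoment (k : ℕ) : ∫ u in Ioo (0 : ℝ) 1, hyp2F1 a b (b + 1) u * u ^ k =
      b * (beta b (1 - a) - beta (1 + k) (1 - a)) / (1 - b + k) := by
    rw [sub_add_eq_add_sub, ← integral_rpow_mul_hyp2F1_add_one ha ha1 hb (by positivity)
      (by simpa only [sub_add_eq_add_sub] using hb1 k)]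
    simp only [add_sub_cancel_left, rpow_natCast, mul_comm]
  have h := hasSum_integral_mul_powerSeries_of_nonneg
    (hyp2F1_coeff_nonneg hα hβ hγ)
    ((hcont.mono Ioo_subset_Icc_self).aestronglyMeasurable measurableSet_Ioo)
    (fun t ht ↦ hasSum_hyp2F1 (natCast_add_ne_zero hα) (natCast_add_ne_zero hβ)
      (natCast_add_ne_zero hγ) (abs_lt.2 ⟨by linarith [ht.1], ht.2⟩)) hprod
  simp_rw [hmoment] at h
  have h' := (((summable_hyp2F1_coeff_div hα hα1 hβ hβγ hb1).hasSum.mul_left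
    (beta b (1 - a))).sub
      (summable_hyp2F1_coeff_mul_beta_div ha1 hα hα1 hβ hβγ hb1).hasSum).mul_left b
  rw [tsum_hyp2F1_coeff_div hb1, tsum_hyp2F1_coeff_mul_beta_div ha1 hb1] at h'
  refine (h.unique (h'.congr_fun fun k ↦ ?_)).trans ?_
  · ring
  · field_simp

end ContiguousDenominator

section TriangleSwap

lemma setIntegral_Ioo_ite_lt {s : ℝ} (hs : 0 ≤ s) (g : ℝ → ℝ) :
    ∫ v in Ioo (0 : ℝ) 1, (if s < v then g v else 0) = ∫ v in Ioo s 1, g v := by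
  have h : (fun v ↦ if s < v then g v else 0) = (Ioi s).indicator g := by
    ext v
    simp only [indicator, mem_Ioi]
  rw [h, setIntegral_indicator measurableSet_Ioi, Ioo_inter_Ioi, max_eq_right hs]

lemma setIntegral_Ioo_ite_gt {v : ℝ} (hv : v ≤ 1) (g : ℝ → ℝ) :
    ∫ s in Ioo (0 : ℝ) 1, (if s < v then g s else 0) = ∫ s in Ioo 0 v, g s := by
  have h : (fun s ↦ if s < v then g s else 0) = (Iio v).indicator g := by
    ext s
    simp only [indicator, mem_Iio]
  rw [h, setIntegral_indicator measurableSet_Iio, Ioo_inter_Iio, min_eq_right hv]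

lemma integrableOn_Ioo_ite_lt {s : ℝ} (hs : 0 ≤ s) {g : ℝ → ℝ} (hg : IntegrableOn g (Ioo s 1)) :
    IntegrableOn (fun v ↦ if s < v then g v else 0) (Ioo 0 1) := by
  have h : (fun v ↦ if s < v then g v else 0) = (Ioi s).indicator g := by
    ext v
    simp only [indicator, mem_Ioi]
  rwa [h, integrableOn_indicator_iff measurableSet_Ioi, inter_comm, Ioo_inter_Ioi, max_eq_right hs]

variable {h k : ℝ → ℝ}

lemma integrable_triangle (hm : Measurable h) (km : Measurable k)
    (h0 : ∀ s ∈ Ioo (0 : ℝ) 1, 0 ≤ h s) (k0 : ∀ v ∈ Ioo (0 : ℝ) 1, 0 ≤ k v)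
    (hk : ∀ s ∈ Ioo (0 : ℝ) 1, IntegrableOn k (Ioo s 1))
    (hhk : IntegrableOn (fun s ↦ h s * ∫ v in Ioo s 1, k v) (Ioo 0 1)) :
    Integrable (Function.uncurry fun s v ↦ if s < v then h s * k v else 0)
      ((volume.restrict (Ioo 0 1)).prod (volume.restrict (Ioo 0 1))) := by
  refine integrable_uncurry_of_nonneg ?_ ?_ ?_ ?_
  · exact ((Measurable.ite (measurableSet_lt measurable_fst measurable_snd)
      ((hm.comp measurable_fst).mul (km.comp measurable_snd))
      measurable_const)).aestronglyMeasurable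
  · refine ae_restrict_of_forall_mem measurableSet_Ioo fun s hs ↦
      ae_restrict_of_forall_mem measurableSet_Ioo fun v hv ↦ ?_
    split_ifs
    · exact mul_nonneg (h0 s hs) (k0 v hv)
    · exact le_rfl
  · exact ae_restrict_of_forall_mem measurableSet_Ioo fun s hs ↦
      integrableOn_Ioo_ite_lt hs.1.le ((hk s hs).const_mul _)
  · refine hhk.congr_fun (fun s hs ↦ ?_) measurableSet_Ioo
    simp only [setIntegral_Ioo_ite_lt hs.1.le, integral_const_mul]

lemma integrableOn_integral_Ioo_mul
    (hhk : Integrable (Function.uncurry fun s v ↦ if s < v then h s * k v else 0)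
      ((volume.restrict (Ioo 0 1)).prod (volume.restrict (Ioo 0 1)))) :
    IntegrableOn (fun v ↦ (∫ s in Ioo 0 v, h s) * k v) (Ioo 0 1) := by
  refine IntegrableOn.congr_fun hhk.integral_prod_right (fun v hv ↦ ?_) measurableSet_Ioo
  simp only [Function.uncurry_apply_pair, setIntegral_Ioo_ite_gt hv.2.le, integral_mul_const]

lemma integral_integral_Ioo_mul
    (hhk : Integrable (Function.uncurry fun s v ↦ if s < v then h s * k v else 0)
      ((volume.restrict (Ioo 0 1)).prod (volume.restrict (Ioo 0 1)))) :
    ∫ v in Ioo (0 : ℝ) 1, (∫ s in Ioo 0 v, h s) * k v =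
      ∫ s in Ioo (0 : ℝ) 1, h s * ∫ v in Ioo s 1, k v :=
  calc ∫ v in Ioo (0 : ℝ) 1, (∫ s in Ioo 0 v, h s) * k v
      = ∫ v in Ioo (0 : ℝ) 1, ∫ s in Ioo (0 : ℝ) 1, if s < v then h s * k v else 0 :=
        setIntegral_congr_fun measurableSet_Ioo fun v hv ↦ by
          simp only [setIntegral_Ioo_ite_gt hv.2.le, integral_mul_const]
    _ = ∫ s in Ioo (0 : ℝ) 1, ∫ v in Ioo (0 : ℝ) 1, if s < v then h s * k v else 0 :=
        (integral_integral_swap hhk).symm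
    _ = ∫ s in Ioo (0 : ℝ) 1, h s * ∫ v in Ioo s 1, k v :=
        setIntegral_congr_fun measurableSet_Ioo fun s hs ↦ by
          simp only [setIntegral_Ioo_ite_lt hs.1.le, integral_const_mul]

end TriangleSwap

section Collapse

variable {a b p u : ℝ}

lemma rpow_mul_hyp2F1_add_one {v : ℝ} (ha : 0 < a) (hb : 0 < b) (hv : v ∈ Ioo 0 1) :
    v ^ b * hyp2F1 a b (b + 1) v = b * ∫ s in Ioo 0 v, s ^ (b - 1) * (1 - s) ^ (-a) := by
  have hsub := intervalIntegral.integral_comp_mul_left (a := 0) (b := 1)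
    (fun s : ℝ ↦ s ^ (b - 1) * (1 - s) ^ (-a)) hv.1.ne'
  rw [mul_zero, mul_one, intervalIntegral.integral_of_le zero_le_one,
    intervalIntegral.integral_of_le hv.1.le, integral_Ioc_eq_integral_Ioo,
    integral_Ioc_eq_integral_Ioo, smul_eq_mul, eq_inv_mul_iff_mul_eq₀ hv.1.ne'] at hsub
  have heuler : v ^ (b - 1) * ∫ t in Ioo (0 : ℝ) 1, eulerKernel a b (b + 1) v t =
      ∫ t in Ioo (0 : ℝ) 1, (v * t) ^ (b - 1) * (1 - v * t) ^ (-a) := by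
    rw [← integral_const_mul]
    refine setIntegral_congr_fun measurableSet_Ioo fun t ht ↦ ?_
    simp only [eulerKernel, add_sub_cancel_left, sub_self, rpow_zero, mul_one,
      mul_rpow hv.1.le ht.1.le, mul_assoc]
  rw [← hsub, ← heuler, integral_eulerKernel ha hb (lt_add_one b) (Ioo_subset_Ico_self hv),
    add_sub_cancel_left, beta_one_right hb.ne' (Gamma_pos_of_pos hb).ne',
    rpow_sub_one hv.1.ne']
  have hv0 := hv.1.ne'
  field_simp

lemma hasDerivAt_neg_eulerInvolution_rpow (hp : p ≠ 0) (hu : u < 1) {v : ℝ} (hv : v ∈ Ioo 0 1) :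
    HasDerivAt (fun v ↦ -(eulerInvolution u v ^ p / (p * (1 - u))))
      ((1 - v) ^ (p - 1) * (1 - u * v) ^ (-(p + 1))) v := by
  have hu' : 1 - u ≠ 0 := (sub_pos.2 hu).ne'
  have huv := one_sub_mul_pos hu hv
  refine (((hasDerivAt_eulerInvolution hu hv).rpow_const (p := p)
    (Or.inl (eulerInvolution_mem_Ioo hu hv).1.ne')).div_const (p * (1 - u))).neg.congr_deriv ?_
  have hpow : (1 - u * v) ^ (p - 1) * (1 - u * v) ^ 2 = (1 - u * v) ^ (p + 1) := by
    rw [← rpow_two, ← rpow_add huv]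
    congr 1
    ring
  rw [eulerInvolution, div_rpow (sub_pos.2 hv.2).le huv.le, rpow_neg huv.le, ← hpow]
  have hne := (rpow_pos_of_pos huv (p - 1)).ne'
  field_simp

lemma continuousOn_eulerInvolution (hu : u < 1) : ContinuousOn (eulerInvolution u) (Ioc 0 1) := by
  refine ContinuousOn.div (by fun_prop) (by fun_prop) fun t ht ↦ ?_
  nlinarith [ht.1, ht.2]

lemma integrableOn_and_integral_one_sub_rpow_mul (hp : 0 < p) (hu : u < 1) {s : ℝ}
    (hs : s ∈ Ioo 0 1) :
    IntegrableOn (fun v ↦ (1 - v) ^ (p - 1) * (1 - u * v) ^ (-(p + 1))) (Ioo s 1) ∧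
      ∫ v in Ioo s 1, (1 - v) ^ (p - 1) * (1 - u * v) ^ (-(p + 1)) =
        eulerInvolution u s ^ p / (p * (1 - u)) := by
  have hsub : Ioo s 1 ⊆ Ioo 0 1 := Ioo_subset_Ioo_left hs.1.le
  have hcont : ContinuousOn (fun v ↦ -(eulerInvolution u v ^ p / (p * (1 - u)))) (Icc s 1) :=
    ((((continuousOn_eulerInvolution hu).mono fun v hv ↦ ⟨hs.1.trans_le hv.1, hv.2⟩).rpow_const
      fun _ _ ↦ Or.inr hp.le).div_const _).neg
  have hderiv v (hv : v ∈ Ioo s 1) := hasDerivAt_neg_eulerInvolution_rpow hp.ne' hu (hsub hv)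
  have hint := intervalIntegral.integrableOn_deriv_of_nonneg hcont hderiv fun v hv ↦
    mul_nonneg (rpow_nonneg (sub_pos.2 hv.2).le _)
      (rpow_nonneg (one_sub_mul_pos hu (hsub hv)).le _)
  refine ⟨hint.mono_set Ioo_subset_Ioc_self, ?_⟩
  rw [← integral_Ioc_eq_integral_Ioo, ← intervalIntegral.integral_of_le hs.2.le,
    intervalIntegral.integral_eq_sub_of_hasDerivAt_of_le hs.2.le hcont hderiv
      ((intervalIntegrable_iff_integrableOn_Ioc_of_le hs.2.le).2 hint)]
  simp [eulerInvolution, zero_rpow hp.ne']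

lemma rpow_mul_eulerInvolution_rpow (hu : u < 1) {s : ℝ} (hs : s ∈ Ioo 0 1) :
    s ^ (b - 1) * (1 - s) ^ (-a) * eulerInvolution u s ^ p =
      eulerKernel p b (b + p + 1 - a) u s := by
  have hs' := sub_pos.2 hs.2
  have hus := one_sub_mul_pos hu hs
  rw [eulerInvolution, div_rpow hs'.le hus.le, eulerKernel, rpow_neg hus.le,
    show b + p + 1 - a - b - 1 = -a + p by ring, rpow_add hs']
  ring

lemma integrable_collapse (hb : 0 < b) (hp : 0 < p) (hap : a < p + 1) (hu : u < 1) :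
    Integrable (Function.uncurry fun s v ↦ if s < v then s ^ (b - 1) * (1 - s) ^ (-a) *
      ((1 - v) ^ (p - 1) * (1 - u * v) ^ (-(p + 1))) else 0)
      ((volume.restrict (Ioo 0 1)).prod (volume.restrict (Ioo 0 1))) := by
  refine integrable_triangle (by fun_prop) (by fun_prop)
    (fun s hs ↦ mul_nonneg (rpow_nonneg hs.1.le _) (rpow_nonneg (sub_pos.2 hs.2).le _))
    (fun v hv ↦ mul_nonneg (rpow_nonneg (sub_pos.2 hv.2).le _)
      (rpow_nonneg (one_sub_mul_pos hu hv).le _))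
    (fun s hs ↦ (integrableOn_and_integral_one_sub_rpow_mul hp hu hs).1) ?_
  refine IntegrableOn.congr_fun ((integrableOn_eulerKernel p hb (c := b + p + 1 - a) (by linarith)
    hu).div_const (p * (1 - u))) (fun s hs ↦ ?_) measurableSet_Ioo
  rw [(integrableOn_and_integral_one_sub_rpow_mul hp hu hs).2, ← mul_div_assoc,
    rpow_mul_eulerInvolution_rpow hu hs]

/-- The weight whose `v`-integral over the unit interval is again a Gaussian hypergeometric function
of `u`, which turns a double integral against it into a single one. -/
noncomputable def collapseKernel (a b p u v : ℝ) : ℝ :=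
  (1 - u) ^ a * v ^ b * (1 - v) ^ (p - a) * (1 - u * v) ^ (-(p + 1)) *
    hyp2F1 1 (b + 1 - a) (b + 1) v

lemma collapseKernel_eq (p : ℝ) {v : ℝ} (ha : 0 < a) (hb : 0 < b) (hab : a < b + 1)
    (hv : v ∈ Ioo 0 1) :
    collapseKernel a b p u v = (1 - u) ^ a * b *
      ((∫ s in Ioo 0 v, s ^ (b - 1) * (1 - s) ^ (-a)) *
        ((1 - v) ^ (p - 1) * (1 - u * v) ^ (-(p + 1)))) := by
  have hv' := sub_pos.2 hv.2
  have heuler : hyp2F1 a b (b + 1) v = (1 - v) ^ (1 - a) * hyp2F1 1 (b + 1 - a) (b + 1) v := by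
    rw [hyp2F1_eq_rpow_mul_hyp2F1 ha hab hb (lt_add_one b) (Ioo_subset_Ico_self hv),
      add_sub_cancel_left, hyp2F1_comm, show b + 1 - a - b = 1 - a by ring]
  have hpow : (1 - v) ^ (p - a) = (1 - v) ^ (p - 1) * (1 - v) ^ (1 - a) := by
    rw [← rpow_add hv', sub_add_sub_cancel]
  rw [collapseKernel, hpow]
  linear_combination (1 - u) ^ a * ((1 - v) ^ (p - 1) * (1 - u * v) ^ (-(p + 1))) *
    (rpow_mul_hyp2F1_add_one ha hb hv - v ^ b * heuler)

lemma integrableOn_collapseKernel (ha : 0 < a) (hb : 0 < b) (hab : a < b + 1) (hp : 0 < p)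
    (hap : a < p + 1) (hu : u < 1) : IntegrableOn (collapseKernel a b p u) (Ioo 0 1) :=
  IntegrableOn.congr_fun
    ((integrableOn_integral_Ioo_mul (integrable_collapse hb hp hap hu)).const_mul ((1 - u) ^ a * b))
    (fun _ hv ↦ (collapseKernel_eq p ha hb hab hv).symm) measurableSet_Ioo

theorem integral_collapseKernel (ha : 0 < a) (hb : 0 < b) (hab : a < b + 1) (hp : 0 < p)
    (hap : a < p + 1) (hu : u ∈ Ico 0 1) :
    ∫ v in Ioo (0 : ℝ) 1, collapseKernel a b p u v =
      b * beta b (p + 1 - a) / p * hyp2F1 (b + 1 - a) (p + 1 - a) (b + p + 1 - a) u := by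
  have hu' := sub_pos.2 hu.2
  calc ∫ v in Ioo (0 : ℝ) 1, collapseKernel a b p u v
      = (1 - u) ^ a * b * ∫ v in Ioo (0 : ℝ) 1, (∫ s in Ioo 0 v, s ^ (b - 1) * (1 - s) ^ (-a)) *
          ((1 - v) ^ (p - 1) * (1 - u * v) ^ (-(p + 1))) := by
        rw [← integral_const_mul]
        exact setIntegral_congr_fun measurableSet_Ioo fun v hv ↦ collapseKernel_eq p ha hb hab hv
    _ = (1 - u) ^ a * b * ∫ s in Ioo (0 : ℝ) 1,
          eulerKernel p b (b + p + 1 - a) u s / (p * (1 - u)) := by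
        rw [integral_integral_Ioo_mul (integrable_collapse hb hp hap hu.2)]
        congr 1
        refine setIntegral_congr_fun measurableSet_Ioo fun s hs ↦ ?_
        rw [(integrableOn_and_integral_one_sub_rpow_mul hp hu.2 hs).2, ← mul_div_assoc,
          rpow_mul_eulerInvolution_rpow hu.2 hs]
    _ = (1 - u) ^ a * b * (beta b (p + 1 - a) * ((1 - u) ^ (1 - a) *
          hyp2F1 (b + 1 - a) (p + 1 - a) (b + p + 1 - a) u) / (p * (1 - u))) := by
        rw [integral_div, integral_eulerKernel hp hb (by linarith) hu,
          hyp2F1_eq_rpow_mul_hyp2F1 hp (by linarith) hb (by linarith) hu]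
        ring_nf
    _ = _ := by
        rw [rpow_sub hu', rpow_one]
        have hne := (rpow_pos_of_pos hu' a).ne'
        field_simp

lemma integrable_uncurry_collapseKernel (hb : 0 < b) (hba : b < a) (hab : a < b + 1) (hp : 0 < p)
    (hap : a < p + 1) :
    Integrable (Function.uncurry (collapseKernel a b p))
      ((volume.restrict (Ioo 0 1)).prod (volume.restrict (Ioo 0 1))) := by
  have ha := hb.trans hba
  have hα := sub_pos.2 hab
  have hF := aestronglyMeasurable_hyp2F1 one_pos hα (by positivity : 0 < b + 1)
  refine integrable_uncurry_of_nonneg (.mul (Measurable.aestronglyMeasurable ?_) hF.comp_snd)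
    ?_ ?_ ?_
  · fun_prop
  · refine ae_restrict_of_forall_mem measurableSet_Ioo fun u hu ↦
      ae_restrict_of_forall_mem measurableSet_Ioo fun v hv ↦ ?_
    have hF0 := hyp2F1_nonneg one_pos hα (by positivity : 0 < b + 1) (Ioo_subset_Ico_self hv)
    have hu' := sub_pos.2 hu.2
    have hv' := sub_pos.2 hv.2
    have huv := one_sub_mul_pos hu.2 hv
    have hv0 := hv.1
    rw [collapseKernel]
    positivity
  · exact ae_restrict_of_forall_mem measurableSet_Ioo fun u hu ↦
      integrableOn_collapseKernel ha hb hab hp hap hu.2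
  · refine IntegrableOn.congr_fun ?_ (fun u hu ↦ (integral_collapseKernel ha hb hab hp hap
      (Ioo_subset_Ico_self hu)).symm) measurableSet_Ioo
    exact (integrableOn_hyp2F1 hα (by linarith) (by linarith) (by linarith)).const_mul _

theorem integral_integral_mul_collapseKernel (hb : 0 < b) (hba : b < a) (hab : a < b + 1)
    (hp : 0 < p) (hap : a < p + 1) {φ : ℝ → ℝ} (hφ : ContinuousOn φ (Icc 0 1)) :
    ∫ v in Ioo (0 : ℝ) 1, ∫ u in Ioo (0 : ℝ) 1, φ u * collapseKernel a b p u v =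
      b * beta b (p + 1 - a) / p * ∫ u in Ioo (0 : ℝ) 1,
        φ u * hyp2F1 (b + 1 - a) (p + 1 - a) (b + p + 1 - a) u := by
  obtain ⟨M, hM⟩ := isCompact_Icc.exists_bound_of_continuousOn hφ
  have hφm : AEStronglyMeasurable φ (volume.restrict (Ioo 0 1)) :=
    (hφ.mono Ioo_subset_Icc_self).aestronglyMeasurable measurableSet_Ioo
  have hint : Integrable (Function.uncurry fun u v ↦ φ u * collapseKernel a b p u v)
      ((volume.restrict (Ioo 0 1)).prod (volume.restrict (Ioo 0 1))) :=
    (integrable_uncurry_collapseKernel hb hba hab hp hap).bdd_mul hφm.comp_fst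
      (Measure.quasiMeasurePreserving_fst.ae (ae_restrict_of_forall_mem measurableSet_Ioo
        fun u hu ↦ hM u (Ioo_subset_Icc_self hu)))
  rw [← integral_integral_swap hint, ← integral_const_mul]
  refine setIntegral_congr_fun measurableSet_Ioo fun u hu ↦ ?_
  rw [integral_const_mul, integral_collapseKernel (hb.trans hba) hb hab hp hap
    (Ioo_subset_Ico_self hu)]
  ring

end Collapse

section Specialization

variable {d : ℝ}

lemma two_mul_sub_one_add_natCast_ne_zero (hd : 0 < d) (hd2 : d ≠ 1 / 2) (k : ℕ) :
    2 * d - 1 + k ≠ 0 := by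
  rcases k with _ | k
  · intro h
    exact hd2 (by push_cast at h; linarith)
  · push_cast
    linarith [k.cast_nonneg (α := ℝ)]

lemma integrand_eq_mul_collapseKernel (d u v : ℝ) :
    (1 - u) ^ (2 - 2 * d) * v ^ (1 - d) * (1 - v) ^ (2 - 3 * d) * (1 - u * v) ^ (5 * d - 5) *
        hyp2F1 d (2 * d - 1) (2 * d) u * hyp2F1 1 d (2 - d) v =
      hyp2F1 d (2 * d - 1) (2 * d) u * collapseKernel (2 - 2 * d) (1 - d) (4 - 5 * d) u v := by
  rw [collapseKernel, show 4 - 5 * d - (2 - 2 * d) = 2 - 3 * d by ring,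
    show -(4 - 5 * d + 1) = 5 * d - 5 by ring, show 1 - d + 1 - (2 - 2 * d) = d by ring,
    show 1 - d + 1 = 2 - d by ring]
  ring

lemma integral_integral_eq_beta_mul (hd0 : 0 < d) (hd1 : d < 4 / 5) (hd2 : d ≠ 1 / 2) :
    (∫ v in (0:ℝ)..1, ∫ u in (0:ℝ)..1,
      (1 - u) ^ (2 - 2 * d) * v ^ (1 - d) * (1 - v) ^ (2 - 3 * d) *
        (1 - u * v) ^ (5 * d - 5) * hyp2F1 d (2 * d - 1) (2 * d) u * hyp2F1 1 d (2 - d) v) =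
      (1 - d) * beta (1 - d) (3 - 3 * d) / (4 - 5 * d) *
        ((2 * d - 1) / (2 - 2 * d) * (beta (2 * d - 1) (1 - d) *
            hyp3F2 d (3 - 3 * d) (2 - 2 * d) (4 - 4 * d) (3 - 2 * d) 1 -
          hyp4F3 1 d (2 - 2 * d) (3 - 3 * d) (2 - d) (3 - 2 * d) (4 - 4 * d) 1 / (1 - d))) := by
  have hb := two_mul_sub_one_add_natCast_ne_zero hd0 hd2
  have hb1 (k : ℕ) : 1 - (2 * d - 1) + k ≠ 0 := natCast_add_ne_zero (by linarith) k
  have hcollapse := integral_integral_mul_collapseKernel (a := 2 - 2 * d) (b := 1 - d)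
    (p := 4 - 5 * d) (by linarith) (by linarith) (by linarith) (by linarith) (by linarith)
    (continuousOn_hyp2F1_add_one hd0 (by linarith) hb)
  have hproduct := integral_hyp2F1_add_one_mul_hyp2F1 (α := d) (β := 3 - 3 * d) (γ := 4 - 4 * d)
    hd0 (by linarith) hb hb1 hd0 (by linarith) (by linarith) (by linarith)
  rw [show 1 - d + 1 - (2 - 2 * d) = d by ring,
    show 4 - 5 * d + 1 - (2 - 2 * d) = 3 - 3 * d by ring,
    show 1 - d + (4 - 5 * d) + 1 - (2 - 2 * d) = 4 - 4 * d by ring, hproduct, sub_add_cancel,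
    show 1 - (2 * d - 1) = 2 - 2 * d by ring, show 2 - 2 * d + 1 = 3 - 2 * d by ring] at hcollapse
  simpa only [intervalIntegral.integral_of_le zero_le_one, integral_Ioc_eq_integral_Ioo,
    integrand_eq_mul_collapseKernel] using hcollapse

lemma hyp3F2_eq_beta_mul (hd0 : 0 < d) (hd1 : d < 4 / 5) :
    hyp3F2 d (3 - 3 * d) (2 - 2 * d) (4 - 4 * d) (3 - 2 * d) 1 =
      (2 - 2 * d) * beta (2 - 2 * d) (2 - 2 * d) / ((4 - 5 * d) * beta (4 - 5 * d) d) *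
        hyp3F2 (2 - 2 * d) (3 - 3 * d) (4 - 5 * d) (4 - 4 * d) (5 - 5 * d) 1 := by
  have h := hyp3F2_thomae (a := d) (b := 3 - 3 * d) (c := 4 - 4 * d) (g := 2 - 2 * d) hd0
    (by linarith) (by linarith) (by linarith) (by linarith) (by linarith)
  have hperm : hyp3F2 (3 - 3 * d) (2 - 2 * d) (4 - 5 * d) (4 - 4 * d) (5 - 5 * d) 1 =
      hyp3F2 (2 - 2 * d) (3 - 3 * d) (4 - 5 * d) (4 - 4 * d) (5 - 5 * d) 1 := by
    simp only [hyp3F2, mul_comm (poch (3 - 3 * d) _)]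
  rw [show 4 - 4 * d - d - (3 - 3 * d) + 1 = 2 - 2 * d by ring,
    show 2 - 2 * d + (2 - 2 * d) = 4 - 4 * d by ring, show 2 - 2 * d + 1 - d = 3 - 3 * d by ring,
    show 2 - 2 * d + 1 = 3 - 2 * d by ring, show 4 - 4 * d - d = 4 - 5 * d by ring,
    show 4 - 5 * d + 1 = 5 - 5 * d by ring, hperm] at h
  have hβ := (beta_pos (by linarith : 0 < 4 - 5 * d) hd0).ne'
  have h₂ : 2 - 2 * d ≠ 0 := by linarith
  have h₄ : 4 - 5 * d ≠ 0 := by linarith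
  rw [div_mul_eq_mul_div, eq_div_iff (mul_ne_zero h₄ hβ)]
  rw [← mul_div_assoc, ← mul_div_assoc, div_eq_div_iff h₂ h₄] at h
  linear_combination h

lemma Gamma_one_sub_div_Gamma_two_sub (hd2 : d ≠ 1 / 2) (hd1 : d < 1) :
    Gamma (1 - 2 * d) / Gamma (2 - 2 * d) = 1 / (1 - 2 * d) := by
  have h₁ : 1 - 2 * d ≠ 0 := fun h ↦ hd2 (by linarith)
  have hΓ₂ : Gamma (2 - 2 * d) ≠ 0 := (Gamma_pos_of_pos (by linarith)).ne'
  have hstep : Gamma (2 - 2 * d) = (1 - 2 * d) * Gamma (1 - 2 * d) := by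
    rw [← Gamma_add_one h₁]
    ring_nf
  rw [div_eq_div_iff hΓ₂ h₁, hstep]
  ring

lemma beta_one_sub_mul_div_eq_Gamma (hd1 : d < 4 / 5) :
    beta (1 - d) (3 - 3 * d) / ((d - 1) * (2 - 2 * d) * (4 - 5 * d)) =
      Gamma (1 - d) * Gamma (2 - 2 * d) * Gamma (3 - 3 * d) * Gamma (4 - 5 * d) /
        ((d - 1) * Gamma (3 - 2 * d) * Gamma (5 - 5 * d) * Gamma (4 - 4 * d)) := by
  have h₂ : 2 - 2 * d ≠ 0 := by linarith
  have h₄ : 4 - 5 * d ≠ 0 := by linarith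
  have hΓ₂ : Gamma (2 - 2 * d) ≠ 0 := (Gamma_pos_of_pos (by linarith)).ne'
  have hΓ₄ : Gamma (4 - 5 * d) ≠ 0 := (Gamma_pos_of_pos (by linarith)).ne'
  rw [beta, show 3 - 2 * d = 2 - 2 * d + 1 by ring, show 5 - 5 * d = 4 - 5 * d + 1 by ring,
    Gamma_add_one h₂, Gamma_add_one h₄, show 1 - d + (3 - 3 * d) = 4 - 4 * d by ring]
  generalize Gamma (2 - 2 * d) = Γ₂ at *
  generalize Gamma (4 - 5 * d) = Γ₄ at *
  field_simp

lemma beta_mul_beta_mul_beta_div_eq_Gamma (hd0 : 0 < d) (hd1 : d < 4 / 5) :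
    beta (1 - d) (3 - 3 * d) * beta (2 * d - 1) (1 - d) * beta (2 - 2 * d) (2 - 2 * d) /
        (beta (4 - 5 * d) d * (4 - 5 * d) ^ 2) =
      Gamma (1 - d) ^ 2 * Gamma (2 - 2 * d) ^ 2 * Gamma (2 * d - 1) * Gamma (3 - 3 * d) /
        (Gamma d ^ 2 * Gamma (5 - 5 * d) * (4 - 5 * d) * Gamma (4 - 4 * d)) := by
  have h₄ : 4 - 5 * d ≠ 0 := by linarith
  have hΓ : Gamma d ≠ 0 := (Gamma_pos_of_pos hd0).ne'
  have hΓ₄ : Gamma (4 - 4 * d) ≠ 0 := (Gamma_pos_of_pos (by linarith)).ne'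
  rw [beta, beta, beta, beta, show 5 - 5 * d = 4 - 5 * d + 1 by ring, Gamma_add_one h₄,
    show 1 - d + (3 - 3 * d) = 4 - 4 * d by ring, show 2 * d - 1 + (1 - d) = d by ring,
    show 2 - 2 * d + (2 - 2 * d) = 4 - 4 * d by ring, show 4 - 5 * d + d = 4 - 4 * d by ring]
  generalize Gamma (4 - 4 * d) = Γ₄ at *
  field_simp

end Specialization

end Development

theorem I2b_formula (d : ℝ) (hd0 : 0 < d) (hd1 : d < 4 / 5) (hd2 : d ≠ 1 / 2)
    (B : ℝ)
    (hB : B = ∫ v in (0:ℝ)..1, ∫ u in (0:ℝ)..1,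
      (1 - u) ^ (2 - 2 * d) * v ^ (1 - d) * (1 - v) ^ (2 - 3 * d) *
        (1 - u * v) ^ (5 * d - 5) * hyp2F1 d (2 * d - 1) (2 * d) u * hyp2F1 1 d (2 - d) v) :
    1 / (d - 1) * (Real.Gamma (1 - 2 * d) / Real.Gamma (2 - 2 * d)) * B
    = Real.Gamma (1 - d) * Real.Gamma (2 - 2 * d) * Real.Gamma (3 - 3 * d) *
        Real.Gamma (4 - 5 * d) /
        ((d - 1) * Real.Gamma (3 - 2 * d) * Real.Gamma (5 - 5 * d) * Real.Gamma (4 - 4 * d)) *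
        hyp4F3 1 d (2 - 2 * d) (3 - 3 * d) (2 - d) (3 - 2 * d) (4 - 4 * d) 1
      + Real.Gamma (1 - d) ^ 2 * Real.Gamma (2 - 2 * d) ^ 2 * Real.Gamma (2 * d - 1) *
          Real.Gamma (3 - 3 * d) /
          (Real.Gamma d ^ 2 * Real.Gamma (5 - 5 * d) * (4 - 5 * d) * Real.Gamma (4 - 4 * d)) *
          hyp3F2 (2 - 2 * d) (3 - 3 * d) (4 - 5 * d) (4 - 4 * d) (5 - 5 * d) 1 := by
  have h₁ : 1 - d ≠ 0 := by linarith
  have h₂ : 1 - 2 * d ≠ 0 := fun h ↦ hd2 (by linarith)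
  have h₄ : 4 - 5 * d ≠ 0 := by linarith
  have hβ := (ProbabilityTheory.beta_pos (by linarith : 0 < 4 - 5 * d) hd0).ne'
  rw [hB, integral_integral_eq_beta_mul hd0 hd1 hd2, hyp3F2_eq_beta_mul hd0 hd1,
    Gamma_one_sub_div_Gamma_two_sub hd2 (by linarith), ← beta_one_sub_mul_div_eq_Gamma hd1,
    ← beta_mul_beta_mul_beta_div_eq_Gamma hd0 hd1, ← neg_sub 1 d, ← neg_sub 1 (2 * d),
    show 2 - 2 * d = 2 * (1 - d) by ring]
  generalize 1 - d = r, 1 - 2 * d = q, 4 - 5 * d = p at *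
  field_simp
  ring
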